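/- Let G be a finite graph whose vertex set is partitioned into 'fake' vertices and 'genuine' vertices, with e_- genuine vertices in total and h_- edges in total. Suppose e_- − h_- > 0. Then some connected component Γ of G is a tree containing no fake vertices. -/

import Mathlib

open Finset

/-!
A component `Γ` that is not a tree, or that contains a fake vertex, has at least as many edges as
genuine vertices. Indeed, fix a root of `Γ` and send every other vertex to the first edge of a
shortest walk to the root: distinct vertices are sent to distinct edges. If `Γ` has a fake vertex,
take it as the root. If `Γ` is not a tree, delete a non-bridge first; the deleted edge then accounts
for the root. If every component were of this kind, summing over the components would give at least
as many edges as genuine vertices in `G`. All comparisons are by injections, so they make sense for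
infinite cardinals too.
-/

section Connected

open Cardinal

variable {V : Type*} {G : SimpleGraph V}

theorem exists_adj_dist_lt_of_reachable_of_ne {r v : V} (hr : G.Reachable v r) (hv : v ≠ r) :
    ∃ w, G.Adj v w ∧ G.dist w r < G.dist v r := by
  obtain ⟨p, hp⟩ := hr.exists_walk_length_eq_dist
  cases p with
  | nil => exact absurd rfl hv
  | cons hvw q =>
    rw [SimpleGraph.Walk.length_cons] at hp
    exact ⟨_, hvw, (SimpleGraph.dist_le q).trans_lt (by omega)⟩

theorem mk_compl_singleton_le_mk_edgeSet (hG : G.Connected) (r : V) :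
    #({r}ᶜ : Set V) ≤ #G.edgeSet := by
  choose parent hadj hdist using fun v : ({r}ᶜ : Set V) ↦
    exists_adj_dist_lt_of_reachable_of_ne (hG v r) v.2
  refine mk_le_of_injective (f := fun v ↦ (⟨s(v, parent v), hadj v⟩ : G.edgeSet)) fun v w hvw ↦ ?_
  rcases Sym2.eq_iff.1 (congrArg Subtype.val hvw) with ⟨h, -⟩ | ⟨hv, hw⟩
  · exact Subtype.ext h
  · have hvdist := hdist v
    have hwdist := hdist w
    rw [hw] at hvdist
    rw [← hv] at hwdist
    omega

theorem mk_le_mk_edgeSet_of_not_isAcyclic (hG : G.Connected) (hcyc : ¬ G.IsAcyclic) :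
    #V ≤ #G.edgeSet := by
  obtain ⟨x, y, hxy, hbridge⟩ : ∃ x y, G.Adj x y ∧ ¬ G.IsBridge s(x, y) := by
    simpa [SimpleGraph.isAcyclic_iff_forall_adj_isBridge] using hcyc
  have hconn := hG.connected_delete_edge_of_not_isBridge hbridge
  calc
    #V = #({x} : Set V) + #({x}ᶜ : Set V) := (mk_sum_compl _).symm
    _ ≤ #({s(x, y)} : Set (Sym2 V)) + #(G.deleteEdges {s(x, y)}).edgeSet := by
      simpa only [mk_singleton] using
        add_le_add_right (mk_compl_singleton_le_mk_edgeSet hconn x) 1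
    _ = #G.edgeSet := by
      rw [SimpleGraph.edgeSet_deleteEdges, add_comm, mk_sdiff_add_mk]
      exact Set.singleton_subset_iff.2 hxy

theorem isTree_and_eq_univ_of_mk_edgeSet_lt (hG : G.Connected) {S : Set V}
    (hS : #G.edgeSet < #S) : G.IsTree ∧ S = Set.univ := by
  refine ⟨⟨hG, ?_⟩, Set.eq_univ_of_forall fun r ↦ ?_⟩
  · by_contra hcyc
    exact hS.not_ge ((mk_set_le S).trans (mk_le_mk_edgeSet_of_not_isAcyclic hG hcyc))
  · by_contra hr
    have hsub : S ⊆ {r}ᶜ := Set.subset_compl_singleton_iff.2 hr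
    exact hS.not_ge ((mk_le_mk_of_subset hsub).trans (mk_compl_singleton_le_mk_edgeSet hG r))

end Connected

section Components

open Cardinal Function

universe u

variable {V ι : Type u} (G : SimpleGraph V) {s : ι → Set V}

theorem sum_mk_edgeSet_induce_le (hs : Pairwise (Disjoint on s)) :
    sum (fun i ↦ #(G.induce (s i)).edgeSet) ≤ #G.edgeSet := by
  rw [← mk_sigma]
  refine mk_le_of_injective
    (f := fun e ↦ (SimpleGraph.Embedding.induce (s e.1)).mapEdgeSet e.2) ?_
  rintro ⟨i, e, he⟩ ⟨j, e', he'⟩ heq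
  have hmap : e.map Subtype.val = e'.map Subtype.val := congrArg Subtype.val heq
  obtain rfl : i = j := by
    induction e with | _ a b =>
    have ha : (a : V) ∈ e'.map Subtype.val := hmap ▸ Sym2.mem_mk_left _ _
    obtain ⟨c, -, hc⟩ := Sym2.mem_map.1 ha
    exact hs.eq (Set.not_disjoint_iff.2 ⟨a, a.2, hc ▸ c.2⟩)
  obtain rfl := Sym2.map.injective Subtype.val_injective hmap
  rfl

theorem exists_mk_edgeSet_induce_lt (hs : Pairwise (Disjoint on s)) {S : Set V}
    (hcover : S ⊆ ⋃ i, s i) (hS : #G.edgeSet < #S) :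
    ∃ i, #(G.induce (s i)).edgeSet < #(Subtype.val ⁻¹' S : Set (s i)) := by
  by_contra! hle
  have hunion : S ⊆ ⋃ i, Subtype.val '' (Subtype.val ⁻¹' S : Set (s i)) := fun v hv ↦ by
    obtain ⟨i, hi⟩ := Set.mem_iUnion.1 (hcover hv)
    exact Set.mem_iUnion.2 ⟨i, ⟨v, hi⟩, hv, rfl⟩
  refine hS.not_ge ?_
  calc
    #S ≤ sum fun i ↦ #(Subtype.val '' (Subtype.val ⁻¹' S : Set (s i)) : Set V) :=
      (mk_le_mk_of_subset hunion).trans mk_iUnion_le_sum_mk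
    _ ≤ sum fun i ↦ #(G.induce (s i)).edgeSet :=
      Cardinal.sum_le_sum _ _ fun i ↦ mk_image_le.trans (hle i)
    _ ≤ #G.edgeSet := sum_mk_edgeSet_induce_le G hs

end Components

theorem exists_tree_component_general {V : Type*} (G : SimpleGraph V) (fake : V → Prop)
    (h : Cardinal.mk G.edgeSet < Cardinal.mk {v // ¬ fake v}) :
    ∃ Γ : G.ConnectedComponent,
      (G.induce Γ.supp).IsTree ∧ ∀ v ∈ Γ.supp, ¬ fake v := by
  have hcover : {v | ¬ fake v} ⊆ ⋃ Γ : G.ConnectedComponent, Γ.supp := fun v _ ↦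
    Set.mem_iUnion.2 ⟨G.connectedComponentMk v, rfl⟩
  obtain ⟨Γ, hΓ⟩ :=
    exists_mk_edgeSet_induce_lt G G.pairwise_disjoint_supp_connectedComponent hcover h
  obtain ⟨htree, huniv⟩ := isTree_and_eq_univ_of_mk_edgeSet_lt Γ.connected_toSimpleGraph hΓ
  exact ⟨Γ, htree, fun v hv ↦ Set.eq_univ_iff_forall.1 huniv ⟨v, hv⟩⟩

/-- Let `G` be a finite graph whose vertices are partitioned into `fake` and
genuine vertices.  If the number `e₋` of genuine vertices exceeds the number
`h₋` of edges, then some connected component of `G` is a tree containing no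
fake vertices. -/
theorem exists_tree_component {V : Type*} [Fintype V] [DecidableEq V]
    (G : SimpleGraph V) [DecidableRel G.Adj]
    (fake : V → Prop) [DecidablePred fake]
    (h : (G.edgeFinset.card : ℤ) < (univ.filter fun v => ¬ fake v).card) :
    ∃ Γ : G.ConnectedComponent,
      (G.induce Γ.supp).IsTree ∧ ∀ v ∈ Γ.supp, ¬ fake v := by
  refine exists_tree_component_general G fake ?_
  rw [Cardinal.mk_fintype, Cardinal.mk_fintype, ← G.edgeFinset_card, Fintype.card_subtype]
  exact_mod_cast h
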